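/- (Chudnovsky-type theorem for ℙ¹×ℙ¹.) Let P₁,…,P_s be mutually distinct points of X = ℙ¹×ℙ¹ and let I = I(P₁) ∩ … ∩ I(P_s) be the radical ideal of their union. Then for every m ≥ 1, α*(I^{(m)})/m ≥ α*(I)/2; equivalently, 2·α*(I^{(m)}) ≥ m·α*(I). -/

import Mathlib

open MvPolynomial

noncomputable section

/-- The bi-graded polynomial ring `ℂ[x₀,x₁,y₀,y₁]`:
the first `Fin 2` summand indexes the variables `x₀,x₁`,
the second the variables `y₀,y₁`. -/
abbrev R4 : Type := MvPolynomial (Fin 2 ⊕ Fin 2) ℂ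

/-- The weight function giving the bi-grading of `R4`. -/
def biWeight : Fin 2 ⊕ Fin 2 → ℕ × ℕ := Sum.elim (fun _ => (1, 0)) (fun _ => (0, 1))

/-- `F` is a (possibly zero) form of bidegree `(p,q)`, i.e. homogeneous of degree `p`
in `x₀,x₁` and homogeneous of degree `q` in `y₀,y₁`. -/
def IsBiForm (F : R4) (p q : ℕ) : Prop :=
  IsWeightedHomogeneous biWeight F (p, q)

/-- The projective line `ℙ¹` over `ℂ`. -/
abbrev ProjLine := Projectivization ℂ (Fin 2 → ℂ)

/-- The bi-homogeneous prime ideal of a point `P = ([a:b],[c:d])` of `X = ℙ¹ × ℙ¹`,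
generated by `b·x₀ - a·x₁` and `d·y₀ - c·y₁`. -/
def pointIdeal (P : ProjLine × ProjLine) : Ideal R4 :=
  Ideal.span
    { C (P.1.rep 1) * X (Sum.inl 0) - C (P.1.rep 0) * X (Sum.inl 1),
      C (P.2.rep 1) * X (Sum.inr 0) - C (P.2.rep 0) * X (Sum.inr 1) }

/-- The `m`-th symbolic power of the radical ideal of the finite set of points `Z ⊂ X`:
`I^{(m)} = ⋂_{P ∈ Z} I(P)^m`.  For `m = 1` this is the radical ideal `I = I(Z)` itself. -/
def symbPow (Z : Finset (ProjLine × ProjLine)) (m : ℕ) : Ideal R4 :=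
  ⨅ P ∈ Z, pointIdeal P ^ m

/-- `α*(J)`: the least `t ≥ 0` such that `J` contains a nonzero form of bidegree `(t,t)`. -/
def alphaStar (J : Ideal R4) : ℕ :=
  sInf {t : ℕ | ∃ F ∈ J, F ≠ 0 ∧ IsBiForm F t t}

/-- `α⁺(J)`: the least `d ≥ 0` such that `J` contains a nonzero form of bidegree `(p,q)`
with `p + q = d`. -/
def alphaPlus (J : Ideal R4) : ℕ :=
  sInf {d : ℕ | ∃ p q : ℕ, p + q = d ∧ ∃ F ∈ J, F ≠ 0 ∧ IsBiForm F p q}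

/-!
In an affine chart `𝔸² ⊆ ℙ¹ × ℙ¹` containing `Z`, the forms of bidegree `(p, q)` become the
polynomials of multidegree at most `(p, q)`. If the ideal of `Z` contains no nonzero form of
bidegree `(a, b)`, then some `W ⊆ Z` with `(a + 1) (b + 1)` points has Lagrange interpolation
polynomials `c_P` of multidegree at most `(a, b)`. The polynomials `(X i - P i) c_P` vanish on `W`,
and they have no common factor because `∑ P, c_P = 1`. So for every `F ≠ 0` there is some `G`
vanishing on `W`, of multidegree at most `(a + 1, b + 1)` and coprime to `F`. If `F` has bidegree
`(p, q)` and lies in the `m`-th symbolic power, Bézout's theorem gives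
`m (a + 1) (b + 1) ≤ p (b + 1) + (a + 1) q`. For `a = b = α* - 1` this is `m α* ≤ p + q`.

The upper Bézout bound on the dimension of the quotient by `(F, G)` is a count of monomials in a
large multidegree, and the local lower bound `m` at `P` holds because multiplication by `G` maps
`𝔪 ^ (m - 1)` to `𝔪 ^ m`, where `𝔪` is the ideal of `P`.
-/

section Multidegree

variable {σ R : Type*} [CommRing R]

/-- The space of polynomials whose degree in each variable `X i` is at most `d i`. -/
def restrictMultidegree (R : Type*) [CommRing R] (d : σ → ℕ) : Submodule R (MvPolynomial σ R) :=
  restrictSupport R {v | ⇑v ≤ d}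

lemma mem_restrictMultidegree {d : σ → ℕ} {f : MvPolynomial σ R} :
    f ∈ restrictMultidegree R d ↔ ∀ i, degreeOf i f ≤ d i := by
  simp only [restrictMultidegree, mem_restrictSupport_iff, degreeOf_le_iff]
  exact ⟨fun h i v hv ↦ h hv i, fun h v hv i ↦ h i v hv⟩

lemma restrictMultidegree_mono {d e : σ → ℕ} (h : d ≤ e) :
    restrictMultidegree R d ≤ restrictMultidegree R e :=
  fun _ hf ↦ mem_restrictMultidegree.2 fun i ↦ (mem_restrictMultidegree.1 hf i).trans (h i)

lemma mul_mem_restrictMultidegree {d e : σ → ℕ} {f g : MvPolynomial σ R}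
    (hf : f ∈ restrictMultidegree R d) (hg : g ∈ restrictMultidegree R e) :
    f * g ∈ restrictMultidegree R (d + e) :=
  mem_restrictMultidegree.2 fun i ↦ (degreeOf_mul_le i f g).trans <|
    add_le_add (mem_restrictMultidegree.1 hf i) (mem_restrictMultidegree.1 hg i)

lemma mul_mem_restrictMultidegree_iff [NoZeroDivisors R] {d : σ → ℕ} {f g : MvPolynomial σ R}
    (hg : g ≠ 0) :
    f * g ∈ restrictMultidegree R (d + (degreeOf · g)) ↔ f ∈ restrictMultidegree R d := by
  rcases eq_or_ne f 0 with rfl | hf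
  · simp only [zero_mul, zero_mem]
  · simp only [mem_restrictMultidegree, degreeOf_mul_eq hf hg, Pi.add_apply, add_le_add_iff_right]

lemma one_mem_restrictMultidegree (d : σ → ℕ) : 1 ∈ restrictMultidegree R d :=
  mem_restrictMultidegree.2 fun i ↦ by simp only [degreeOf_one, zero_le]

lemma aeval_mem_restrictMultidegree {τ : Type*} {w : τ → σ → ℕ} {d : σ → ℕ}
    {g : τ → MvPolynomial σ R} (hg : ∀ j, g j ∈ restrictMultidegree R (w j))
    {F : MvPolynomial τ R} (hF : ∀ v ∈ F.support, Finsupp.weight w v ≤ d) :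
    aeval g F ∈ restrictMultidegree R d := by
  rw [aeval_def, eval₂_eq]
  refine Submodule.sum_mem _ fun v hv ↦ ?_
  rw [← Algebra.smul_def]
  refine Submodule.smul_mem _ _ (mem_restrictMultidegree.2 fun i ↦ ?_)
  calc degreeOf i (∏ j ∈ v.support, g j ^ v j)
      ≤ ∑ j ∈ v.support, degreeOf i (g j ^ v j) := degreeOf_prod_le _ _ _
    _ ≤ ∑ j ∈ v.support, v j * w j i := Finset.sum_le_sum fun j _ ↦
        (degreeOf_pow_le i (g j) (v j)).trans <|
          Nat.mul_le_mul_left _ (mem_restrictMultidegree.1 (hg j) i)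
    _ = Finsupp.weight w v i := by
        simp only [Finsupp.weight_apply, Finsupp.sum, Finset.sum_apply, Pi.smul_apply, smul_eq_mul]
    _ ≤ d i := hF v hv i

/-- The exponents of the monomials in `restrictMultidegree R d`, as a finite product. -/
def multidegreeLEEquiv [Finite σ] (d : σ → ℕ) : {v : σ →₀ ℕ | ⇑v ≤ d} ≃ ∀ i, Fin (d i + 1) where
  toFun v i := ⟨v.1 i, Nat.lt_succ_of_le (v.2 i)⟩
  invFun w := ⟨Finsupp.equivFunOnFinite.symm fun i ↦ w i, fun i ↦ Nat.lt_succ_iff.1 (w i).2⟩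
  left_inv _ := Subtype.ext (Finsupp.ext fun _ ↦ rfl)
  right_inv _ := rfl

/-- The monomial basis of `restrictMultidegree R d`. -/
def basisRestrictMultidegree [Finite σ] (R : Type*) [CommRing R] (d : σ → ℕ) :
    Module.Basis (∀ i, Fin (d i + 1)) R (restrictMultidegree R d) :=
  (basisRestrictSupport R _).reindex (multidegreeLEEquiv d)

instance finite_restrictMultidegree [Finite σ] (d : σ → ℕ) :
    Module.Finite R (restrictMultidegree R d) :=
  .of_basis (basisRestrictMultidegree R d)

lemma finrank_restrictMultidegree [Fintype σ] [Nontrivial R] (d : σ → ℕ) :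
    Module.finrank R (restrictMultidegree R d) = ∏ i, (d i + 1) := by
  classical
  rw [Module.finrank_eq_card_basis (basisRestrictMultidegree R d), Fintype.card_pi]
  simp only [Fintype.card_fin]

end Multidegree

section Bezout

variable {σ R K : Type*} [CommRing R] [Field K]

lemma finrank_map_mulRight_restrictMultidegree [Fintype σ] [IsDomain R] (d : σ → ℕ)
    {F : MvPolynomial σ R} (hF : F ≠ 0) :
    Module.finrank R ((restrictMultidegree R d).map (LinearMap.mulRight R F)) =
      ∏ i, (d i + 1) := by
  rw [← finrank_restrictMultidegree (R := R) d]
  exact (Submodule.equivMapOfInjective _ (mul_left_injective₀ hF) _).finrank_eq.symm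

lemma map_mulRight_restrictMultidegree_inf_le (c : σ → ℕ) {F G : MvPolynomial σ K} (hG : G ≠ 0)
    (h : IsRelPrime F G) :
    (restrictMultidegree K (c + (degreeOf · G))).map (LinearMap.mulRight K F) ⊓
        (restrictMultidegree K (c + (degreeOf · F))).map (LinearMap.mulRight K G) ≤
      (restrictMultidegree K c).map (LinearMap.mulRight K (G * F)) := by
  rintro _ ⟨⟨f, hf, rfl⟩, g, -, hfg : g * G = f * F⟩
  obtain ⟨k, rfl⟩ : G ∣ f := h.symm.dvd_of_dvd_mul_right (hfg ▸ dvd_mul_left G g)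
  refine ⟨k, (mul_mem_restrictMultidegree_iff hG).1 (by rwa [mul_comm k]), ?_⟩
  simp only [LinearMap.mulRight_apply]
  ring

lemma map_mulRight_restrictMultidegree_le (c : σ → ℕ) (F G : MvPolynomial σ R) :
    (restrictMultidegree R (c + (degreeOf · G))).map (LinearMap.mulRight R F) ≤
      restrictMultidegree R (c + (degreeOf · F) + (degreeOf · G)) ⊓
        (Ideal.span {F, G}).restrictScalars R := by
  rintro _ ⟨f, hf, rfl⟩
  refine ⟨?_, Ideal.mul_mem_left _ f (Ideal.subset_span (Set.mem_insert F {G}))⟩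
  rw [add_right_comm]
  exact mul_mem_restrictMultidegree hf (mem_restrictMultidegree.2 fun _ ↦ le_rfl)

lemma finrank_restrictMultidegree_inf_span_pair_ge [Fintype σ] (c : σ → ℕ)
    {F G : MvPolynomial σ K} (hF : F ≠ 0) (hG : G ≠ 0) (h : IsRelPrime F G) :
    ∏ i, (c i + degreeOf i G + 1) + ∏ i, (c i + degreeOf i F + 1) ≤
      Module.finrank K ↥(restrictMultidegree K (c + (degreeOf · F) + (degreeOf · G)) ⊓
        (Ideal.span {F, G}).restrictScalars K) + ∏ i, (c i + 1) := by
  set U := (restrictMultidegree K (c + (degreeOf · G))).map (LinearMap.mulRight K F) with hU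
  set V := (restrictMultidegree K (c + (degreeOf · F))).map (LinearMap.mulRight K G) with hV
  have hUV : U ⊔ V ≤ restrictMultidegree K (c + (degreeOf · F) + (degreeOf · G)) ⊓
      (Ideal.span {F, G}).restrictScalars K := by
    refine sup_le (map_mulRight_restrictMultidegree_le c F G) ?_
    rw [add_right_comm, Set.pair_comm]
    exact map_mulRight_restrictMultidegree_le c G F
  calc ∏ i, (c i + degreeOf i G + 1) + ∏ i, (c i + degreeOf i F + 1)
      = Module.finrank K U + Module.finrank K V := by
        rw [hU, hV, finrank_map_mulRight_restrictMultidegree _ hF,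
          finrank_map_mulRight_restrictMultidegree _ hG]
        rfl
    _ = Module.finrank K ↥(U ⊔ V) + Module.finrank K ↥(U ⊓ V) :=
        (Submodule.finrank_sup_add_finrank_inf_eq U V).symm
    _ ≤ _ := by
        refine add_le_add (Submodule.finrank_mono hUV) ?_
        rw [← finrank_map_mulRight_restrictMultidegree c (mul_ne_zero hG hF)]
        exact Submodule.finrank_mono (map_mulRight_restrictMultidegree_inf_le c hG h)

lemma finrank_map_add_finrank_inf_ker {V W : Type*} [AddCommGroup V] [Module K V]
    [AddCommGroup W] [Module K W] (f : V →ₗ[K] W) (U : Submodule K V) [FiniteDimensional K U] :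
    Module.finrank K (U.map f) + Module.finrank K ↥(U ⊓ LinearMap.ker f) =
      Module.finrank K U := by
  have h := LinearMap.finrank_range_add_finrank_ker (f.domRestrict U)
  rwa [LinearMap.range_domRestrict, LinearMap.ker_domRestrict,
    ← Submodule.finrank_map_subtype_eq U, Submodule.map_comap_subtype] at h

theorem finrank_map_mk_span_pair_le {F G : MvPolynomial (Fin 2) K} (hF : F ≠ 0) (hG : G ≠ 0)
    (h : IsRelPrime F G) (d : Fin 2 → ℕ) :
    Module.finrank K ((restrictMultidegree K d).map
      (Ideal.Quotient.mkₐ K (Ideal.span {F, G})).toLinearMap) ≤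
      degreeOf 0 F * degreeOf 1 G + degreeOf 0 G * degreeOf 1 F := by
  set φ := (Ideal.Quotient.mkₐ K (Ideal.span {F, G})).toLinearMap
  set e : Fin 2 → ℕ := d + (degreeOf · F) + (degreeOf · G) with he
  have hker : LinearMap.ker φ = (Ideal.span {F, G}).restrictScalars K :=
    Submodule.ext fun x ↦ Ideal.Quotient.eq_zero_iff_mem
  have hmap := finrank_map_add_finrank_inf_ker φ (restrictMultidegree K e)
  have hinf := finrank_restrictMultidegree_inf_span_pair_ge d hF hG h
  rw [hker, finrank_restrictMultidegree] at hmap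
  have hmono : Module.finrank K ((restrictMultidegree K d).map φ) ≤
      Module.finrank K ((restrictMultidegree K e).map φ) :=
    Submodule.finrank_mono <| Submodule.map_mono <| restrictMultidegree_mono <| by
      rw [he, add_assoc]; exact le_self_add
  simp only [Fin.prod_univ_two, he, Pi.add_apply] at hmap hinf
  linarith

theorem rank_quotient_span_pair_le {F G : MvPolynomial (Fin 2) K} (hF : F ≠ 0) (hG : G ≠ 0)
    (h : IsRelPrime F G) :
    Module.rank K (MvPolynomial (Fin 2) K ⧸ Ideal.span {F, G}) ≤
      (degreeOf 0 F * degreeOf 1 G + degreeOf 0 G * degreeOf 1 F : ℕ) := by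
  refine rank_le fun s hs ↦ ?_
  set φ := Ideal.Quotient.mkₐ K (Ideal.span {F, G})
  obtain ⟨lift, hlift⟩ := (Ideal.Quotient.mkₐ_surjective K (Ideal.span {F, G})).hasRightInverse
  let d : Fin 2 → ℕ := fun i ↦ s.sup fun x ↦ degreeOf i (lift x)
  have hs_le : Submodule.span K s ≤ (restrictMultidegree K d).map φ.toLinearMap :=
    Submodule.span_le.2 fun x hx ↦ ⟨lift x, mem_restrictMultidegree.2 fun i ↦
      Finset.le_sup (f := fun x ↦ degreeOf i (lift x)) hx, hlift x⟩
  rw [← finrank_span_finset_eq_card hs]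
  exact (Submodule.finrank_mono hs_le).trans (finrank_map_mk_span_pair_le hF hG h d)

lemma finrank_le_of_surjective_of_apply_eq_zero {F G : MvPolynomial (Fin 2) K} (hF : F ≠ 0)
    (hG : G ≠ 0) (h : IsRelPrime F G) {B : Type*} [CommRing B] [Algebra K B]
    {φ : MvPolynomial (Fin 2) K →ₐ[K] B} (hφ : Function.Surjective φ) (hφF : φ F = 0)
    (hφG : φ G = 0) :
    Module.finrank K B ≤ degreeOf 0 F * degreeOf 1 G + degreeOf 0 G * degreeOf 1 F := by
  have hker : Ideal.span {F, G} ≤ RingHom.ker φ := Ideal.span_le.2 (Set.pair_subset hφF hφG)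
  have hlift : Function.Surjective (Ideal.Quotient.liftₐ (Ideal.span {F, G}) φ hker).toLinearMap :=
    Ideal.Quotient.lift_surjective_of_surjective _ hker hφ
  have hrank := rank_quotient_span_pair_le hF hG h
  have : Module.Finite K (MvPolynomial (Fin 2) K ⧸ Ideal.span {F, G}) :=
    Module.rank_lt_aleph0_iff.1 (hrank.trans_lt Cardinal.natCast_lt_aleph0)
  exact (LinearMap.finrank_le_finrank_of_surjective hlift).trans
    (Module.finrank_le_of_rank_le hrank)

end Bezout

section Multiplicity

lemma finrank_quotient_le_add {K A : Type*} [Field K] [CommRing A] [Algebra K A] {I J : Ideal A}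
    [FiniteDimensional K (A ⧸ I)] [FiniteDimensional K (A ⧸ J)] {g : A}
    (h : ∀ x ∈ J, x * g ∈ I) :
    Module.finrank K (A ⧸ I) ≤
      Module.finrank K (A ⧸ J) + Module.finrank K (A ⧸ (I ⊔ Ideal.span {g})) := by
  let μ : (A ⧸ J) →ₗ[K] A ⧸ I := (Submodule.mapQ J I (LinearMap.mulRight A g) h).restrictScalars K
  let π : (A ⧸ I) →ₗ[K] A ⧸ (I ⊔ Ideal.span {g}) :=
    (Ideal.Quotient.factorₐ K (le_sup_left : I ≤ I ⊔ Ideal.span {g})).toLinearMap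
  have hπ : Function.Surjective π := Ideal.Quotient.factor_surjective le_sup_left
  have hker : LinearMap.ker π ≤ LinearMap.range μ := by
    intro x hx
    obtain ⟨f, rfl⟩ := Ideal.Quotient.mk_surjective x
    obtain ⟨u, hu, v, hv, rfl⟩ := Submodule.mem_sup.1 (Ideal.Quotient.eq_zero_iff_mem.1 hx)
    obtain ⟨w, rfl⟩ := Ideal.mem_span_singleton'.1 hv
    refine ⟨Ideal.Quotient.mk J w, ?_⟩
    rw [map_add, Ideal.Quotient.eq_zero_iff_mem.2 hu, zero_add]
    rfl
  calc Module.finrank K (A ⧸ I)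
      = Module.finrank K (LinearMap.ker π) + Module.finrank K (LinearMap.range π) := by
        rw [add_comm, LinearMap.finrank_range_add_finrank_ker]
    _ ≤ _ := by
        rw [LinearMap.range_eq_top.2 hπ, finrank_top]
        exact Nat.add_le_add_right
          ((Submodule.finrank_mono hker).trans (LinearMap.finrank_range_le μ)) _

variable {σ R K : Type*} [CommRing R] [Field K]

/-- The automorphism of the polynomial ring induced by the translation by `P`. -/
def translateEquiv (P : σ → R) : MvPolynomial σ R ≃ₐ[R] MvPolynomial σ R :=
  .ofAlgHom (aeval fun i ↦ X i + C (P i)) (aeval fun i ↦ X i - C (P i))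
    (by ext i : 1; simp) (by ext i : 1; simp)

lemma constantCoeff_translate (P : σ → R) (f : MvPolynomial σ R) :
    constantCoeff (translateEquiv P f) = aeval P f := by
  have h : (constantCoeff.comp (translateEquiv P : MvPolynomial σ R →+* MvPolynomial σ R)) =
      (aeval P : MvPolynomial σ R →ₐ[R] R) := by
    ext i <;> simp [translateEquiv]
  exact RingHom.congr_fun h f

lemma mem_idealOfVars_iff {f : MvPolynomial σ R} :
    f ∈ idealOfVars σ R ↔ constantCoeff f = 0 := by
  rw [← pow_one (idealOfVars σ R), mem_pow_idealOfVars_iff']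
  simp only [Nat.lt_one_iff, Finsupp.degree_eq_zero_iff, forall_eq, constantCoeff_eq]

lemma map_translate_vanishingIdeal (P : σ → K) :
    (vanishingIdeal K {P}).map (translateEquiv P : MvPolynomial σ K →+* MvPolynomial σ K) =
      idealOfVars σ K := by
  ext f
  obtain ⟨g, rfl⟩ := (translateEquiv P).surjective f
  rw [mem_idealOfVars_iff, constantCoeff_translate, ← mem_vanishingIdeal_singleton_iff]
  exact Ideal.mem_map_of_equiv (translateEquiv P).toRingEquiv _ |>.trans (by simp)

lemma map_translate_pow_vanishingIdeal (P : σ → K) (n : ℕ) :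
    (vanishingIdeal K {P} ^ n).map (translateEquiv P : MvPolynomial σ K →+* MvPolynomial σ K) =
      idealOfVars σ K ^ n := by
  rw [Ideal.map_pow, map_translate_vanishingIdeal]

/-- The exponents of the monomials of degree less than `n`. -/
def degreeLT (σ : Type*) [Fintype σ] [DecidableEq σ] (n : ℕ) : Finset (σ →₀ ℕ) :=
  (Finset.range n).biUnion (Finset.finsuppAntidiag Finset.univ)

lemma mem_degreeLT [Fintype σ] [DecidableEq σ] {n : ℕ} {v : σ →₀ ℕ} :
    v ∈ degreeLT σ n ↔ v.degree < n := by
  simp [degreeLT, Finset.mem_finsuppAntidiag, Finsupp.degree_eq_sum]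

lemma card_degreeLT [Fintype σ] [DecidableEq σ] (n : ℕ) :
    (degreeLT σ n).card = ∑ k ∈ Finset.range n, (Fintype.card σ).multichoose k := by
  rw [degreeLT, Finset.card_biUnion]
  · simp only [Finset.card_finsuppAntidiag_nat_eq_multichoose, Finset.card_univ]
  · intro k _ l _ hkl
    refine Finset.disjoint_left.2 fun v hk hl ↦ hkl ?_
    rw [← (Finset.mem_finsuppAntidiag.1 hk).1, (Finset.mem_finsuppAntidiag.1 hl).1]

/-- The coefficients of degree less than `n` identify the quotient by the `n`-th power of the
ideal of the origin with a space of functions. -/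
def quotientPowIdealOfVarsEquiv [Fintype σ] [DecidableEq σ] (n : ℕ) :
    (MvPolynomial σ R ⧸ idealOfVars σ R ^ n) ≃ₗ[R] degreeLT σ n → R := by
  let φ : MvPolynomial σ R →ₗ[R] degreeLT σ n → R := LinearMap.pi fun v ↦ lcoeff R v.1
  have hφ : Function.Surjective φ := fun w ↦
    ⟨∑ v, monomial v.1 (w v), by ext v; simp [φ, coeff_monomial]⟩
  have hker : (idealOfVars σ R ^ n).restrictScalars R = LinearMap.ker φ := by
    ext f
    simp only [Submodule.restrictScalars_mem, mem_pow_idealOfVars_iff', ← mem_degreeLT,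
      LinearMap.mem_ker, funext_iff]
    exact ⟨fun h v ↦ h v v.2, fun h v hv ↦ h ⟨v, hv⟩⟩
  exact (Submodule.Quotient.restrictScalarsEquiv R _).symm.trans <|
    (Submodule.quotEquivOfEq _ _ hker).trans (φ.quotKerEquivOfSurjective hφ)

/-- Taylor coefficients identify the quotient by the `n`-th power of the ideal of a point with
a space of functions. -/
def quotientPowVanishingIdealEquiv [Fintype σ] [DecidableEq σ] (P : σ → K) (n : ℕ) :
    (MvPolynomial σ K ⧸ vanishingIdeal K {P} ^ n) ≃ₗ[K] degreeLT σ n → K :=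
  (Ideal.quotientEquivAlg (vanishingIdeal K {P} ^ n) (idealOfVars σ K ^ n) (translateEquiv P)
    (map_translate_pow_vanishingIdeal P n).symm).toLinearEquiv.trans (quotientPowIdealOfVarsEquiv n)

lemma finrank_quotient_pow_vanishingIdeal [Fintype σ] (P : σ → K) (n : ℕ) :
    Module.finrank K (MvPolynomial σ K ⧸ vanishingIdeal K {P} ^ n) =
      ∑ k ∈ Finset.range n, (Fintype.card σ).multichoose k := by
  classical
  rw [(quotientPowVanishingIdealEquiv P n).finrank_eq, Module.finrank_fintype_fun_eq_card,
    Fintype.card_coe, card_degreeLT]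

lemma finite_quotient_of_pow_vanishingIdeal_le [Finite σ] {P : σ → K} {n : ℕ}
    {J : Ideal (MvPolynomial σ K)} (hJ : vanishingIdeal K {P} ^ n ≤ J) :
    Module.Finite K (MvPolynomial σ K ⧸ J) := by
  classical
  have := Fintype.ofFinite σ
  have : Module.Finite K (MvPolynomial σ K ⧸ vanishingIdeal K {P} ^ n) :=
    .equiv (quotientPowVanishingIdealEquiv P n).symm
  exact .of_surjective (Ideal.Quotient.factorₐ K hJ).toLinearMap
    (Ideal.Quotient.factor_surjective hJ)

theorem le_finrank_quotient_pow_sup_span_singleton {P : Fin 2 → K} {G : MvPolynomial (Fin 2) K}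
    (hG : G ∈ vanishingIdeal K {P}) (n : ℕ) :
    n ≤ Module.finrank K
      (MvPolynomial (Fin 2) K ⧸ (vanishingIdeal K {P} ^ n ⊔ Ideal.span {G})) := by
  rcases n with _ | n
  · exact Nat.zero_le _
  have (k : ℕ) := finite_quotient_of_pow_vanishingIdeal_le (le_refl (vanishingIdeal K {P} ^ k))
  have h := finrank_quotient_le_add (K := K) (I := vanishingIdeal K {P} ^ (n + 1))
    (J := vanishingIdeal K {P} ^ n) fun x hx ↦ Ideal.mul_mem_mul hx hG
  rw [finrank_quotient_pow_vanishingIdeal, finrank_quotient_pow_vanishingIdeal,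
    Finset.sum_range_succ, Fintype.card_fin, Nat.multichoose_two] at h
  exact Nat.le_of_add_le_add_left h

lemma isCoprime_vanishingIdeal_pow_sup {P Q : σ → K} (hPQ : P ≠ Q) (m : ℕ)
    (J : Ideal (MvPolynomial σ K)) :
    IsCoprime (vanishingIdeal K {P} ^ m ⊔ J) (vanishingIdeal K {Q} ^ m ⊔ J) := by
  have hne : vanishingIdeal K {P} ≠ vanishingIdeal K {Q} := fun h ↦ hPQ <| funext fun i ↦ by
    have hi : X i - C (P i) ∈ vanishingIdeal K {Q} := by
      simp [← h]
    simpa [mem_vanishingIdeal_singleton_iff, sub_eq_zero, eq_comm] using hi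
  have hpow : IsCoprime (vanishingIdeal K {P} ^ m) (vanishingIdeal K {Q} ^ m) :=
    (Ideal.isCoprime_of_isMaximal hne).pow
  rw [Ideal.isCoprime_iff_codisjoint] at hpow ⊢
  exact hpow.mono le_sup_left le_sup_left

theorem card_mul_le_degreeOf_mul_add {W : Finset (Fin 2 → K)} {m : ℕ}
    {F G : MvPolynomial (Fin 2) K} (hF : F ≠ 0) (hG : G ≠ 0) (h : IsRelPrime F G)
    (hFW : ∀ P ∈ W, F ∈ vanishingIdeal K {P} ^ m)
    (hGW : G ∈ vanishingIdeal K (W : Set (Fin 2 → K))) :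
    W.card * m ≤ degreeOf 0 F * degreeOf 1 G + degreeOf 0 G * degreeOf 1 F := by
  let J (P : W) : Ideal (MvPolynomial (Fin 2) K) := vanishingIdeal K {P.1} ^ m ⊔ Ideal.span {G}
  let φ : MvPolynomial (Fin 2) K →ₐ[K] ∀ P, MvPolynomial (Fin 2) K ⧸ J P :=
    AlgHom.pi fun P ↦ Ideal.Quotient.mkₐ K (J P)
  have hφ : Function.Surjective φ := fun x ↦
    (Ideal.pi_quotient_surjective (fun P Q hPQ ↦ isCoprime_vanishingIdeal_pow_sup
      (Subtype.coe_injective.ne hPQ) m _) x).imp fun _ ↦ funext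
  have hφF : φ F = 0 := funext fun P ↦
    Ideal.Quotient.eq_zero_iff_mem.2 (Ideal.mem_sup_left (hFW P P.2))
  have hφG : φ G = 0 := funext fun P ↦
    Ideal.Quotient.eq_zero_iff_mem.2 (Ideal.mem_sup_right (Ideal.mem_span_singleton_self G))
  have (P : W) : Module.Finite K (MvPolynomial (Fin 2) K ⧸ J P) :=
    finite_quotient_of_pow_vanishingIdeal_le (le_sup_left : vanishingIdeal K {P.1} ^ m ≤ J P)
  calc W.card * m = ∑ _P : W, m := by
        rw [Finset.sum_const, Finset.card_univ, Fintype.card_coe, smul_eq_mul]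
    _ ≤ ∑ P : W, Module.finrank K (MvPolynomial (Fin 2) K ⧸ J P) :=
        Finset.sum_le_sum fun P _ ↦ le_finrank_quotient_pow_sup_span_singleton
          ((mem_vanishingIdeal_singleton_iff _ _).2 (hGW P P.2)) m
    _ = Module.finrank K (∀ P : W, MvPolynomial (Fin 2) K ⧸ J P) :=
        (Module.finrank_pi_fintype K).symm
    _ ≤ _ := finrank_le_of_surjective_of_apply_eq_zero hF hG h hφ hφF hφG

end Multiplicity

section Interpolation

variable {X K : Type*} [Field K] {V : Type*} [AddCommGroup V] [Module K V] [FiniteDimensional K V]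

theorem exists_finset_bijective_restrict (ev : V →ₗ[K] X → K) {Z : Set X}
    (hZ : ∀ f, (∀ x ∈ Z, ev f x = 0) → f = 0) :
    ∃ W : Finset X, ↑W ⊆ Z ∧ Function.Bijective fun f (x : W) ↦ ev f x := by
  let L (x : X) : Module.Dual K V := LinearMap.proj x ∘ₗ ev
  obtain ⟨b, hbZ, -, hspan, hb⟩ :=
    exists_linearIndepOn_extension (linearIndepOn_empty K L) (Set.empty_subset Z)
  have : Finite b := LinearIndependent.finite hb
  lift b to Finset X using b.toFinite
  let evW : V →ₗ[K] b → K := LinearMap.funLeft K K Subtype.val ∘ₗ ev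
  have hinj : Function.Injective evW := by
    refine (injective_iff_map_eq_zero evW).2 fun f hf ↦ hZ f fun x hx ↦ ?_
    have hker : Submodule.span K (L '' b) ≤ LinearMap.ker (Module.Dual.eval K V f) := by
      rw [Submodule.span_le]
      rintro _ ⟨y, hy, rfl⟩
      exact congrFun hf ⟨y, hy⟩
    exact hker (hspan (Set.mem_image_of_mem L hx))
  have hcard : Module.finrank K V = Module.finrank K (b → K) := by
    refine le_antisymm (LinearMap.finrank_le_finrank_of_injective hinj) ?_
    rw [Module.finrank_fintype_fun_eq_card, ← Subspace.dual_finrank_eq (K := K) (V := V)]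
    exact hb.linearIndependent.fintype_card_le_finrank
  exact ⟨b, hbZ, hinj, (LinearMap.injective_iff_surjective_of_finrank_eq_finrank hcard).1 hinj⟩

end Interpolation

section CommonFactor

lemma dvd_of_isRelPrime_of_dvd_mul {A : Type*} [CommMonoidWithZero A]
    [UniqueFactorizationMonoid A] {x y c H : A} (h : IsRelPrime x y) (hx : H ∣ x * c)
    (hy : H ∣ y * c) : H ∣ c := by
  have := UniqueFactorizationMonoid.toGCDMonoid A
  have hunit : IsUnit (gcd x y) := gcd_isUnit_iff_isRelPrime.2 h
  exact hunit.dvd_mul_left.1 ((dvd_gcd hx hy).trans (gcd_mul_right' c x y).dvd)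

theorem exists_mem_isRelPrime {K A : Type*} [Field K] [Infinite K] [CommRing A] [IsDomain A]
    [UniqueFactorizationMonoid A] [Algebra K A] {S : Submodule K A}
    (hS : ∀ H, (∀ f ∈ S, H ∣ f) → IsUnit H) {F : A} (hF : F ≠ 0) :
    ∃ G ∈ S, G ≠ 0 ∧ IsRelPrime F G := by
  classical
  let s : Finset A := insert 0 (UniqueFactorizationMonoid.factors F).toFinset
  let D (H : s) : Submodule K S := ((Ideal.span {H.1}).restrictScalars K).comap S.subtype
  have hD (H : s) (f : S) : f ∈ D H ↔ H.1 ∣ f.1 := Ideal.mem_span_singleton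
  have hnot_unit (H : s) : ¬ IsUnit H.1 := by
    rcases Finset.mem_insert.1 H.2 with h | h
    · rw [h]
      exact not_isUnit_zero
    · exact (UniqueFactorizationMonoid.irreducible_of_factor _
        (Multiset.mem_toFinset.1 h)).not_isUnit
  have hcover : ⋃ H, (D H : Set S) ≠ Set.univ := fun hcover ↦ by
    obtain ⟨H, hH⟩ := Subspace.exists_eq_top_of_iUnion_eq_univ hcover
    exact hnot_unit H <| hS H fun f hf ↦ (hD H ⟨f, hf⟩).1 (by rw [hH]; exact Submodule.mem_top)
  obtain ⟨G, hG⟩ := (Set.ne_univ_iff_exists_notMem _).1 hcover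
  have hndvd (H : s) : ¬ H.1 ∣ G.1 := fun h ↦ hG (Set.mem_iUnion.2 ⟨H, (hD H G).2 h⟩)
  refine ⟨G, G.2, fun h ↦ hndvd ⟨0, Finset.mem_insert_self _ _⟩ (zero_dvd_iff.2 h), ?_⟩
  refine WfDvdMonoid.isRelPrime_of_no_irreducible_factors (fun h ↦ hF h.1) fun z hz hzF hzG ↦ ?_
  obtain ⟨q, hq, hzq⟩ := UniqueFactorizationMonoid.exists_mem_factors_of_dvd hF hz hzF
  exact hndvd ⟨q, Finset.mem_insert_of_mem (Multiset.mem_toFinset.2 hq)⟩ (hzq.symm.dvd.trans hzG)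

variable {σ R : Type*} [CommRing R] [IsDomain R]

lemma irreducible_X_sub_C (i : σ) (a : R) :
    Irreducible (X i - C a : MvPolynomial σ R) := by
  simpa [sub_eq_add_neg] using irreducible_mul_X_add (1 : MvPolynomial σ R) (-C a) i one_ne_zero
    (by simp) (by simp) isRelPrime_one_left

lemma isRelPrime_X_sub_C {i j : σ} (hij : i ≠ j) (a b : R) :
    IsRelPrime (X i - C a : MvPolynomial σ R) (X j - C b) := by
  classical
  refine (irreducible_X_sub_C i a).isRelPrime_iff_not_dvd.2 fun h ↦ ?_
  have := map_dvd (eval (Function.update (fun _ ↦ a) j (b + 1))) h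
  simp [hij] at this

end CommonFactor

section AffineBound

variable {σ K : Type*} [Field K]

lemma exists_separating_finset [Fintype σ] {d : σ → ℕ} {Z : Set (σ → K)}
    (hZ : Disjoint (restrictMultidegree K d) ((vanishingIdeal K Z).restrictScalars K)) :
    ∃ W : Finset (σ → K), ↑W ⊆ Z ∧ W.card = ∏ i, (d i + 1) ∧
      ∃ c : W → MvPolynomial σ K, (∀ P, c P ∈ restrictMultidegree K d) ∧
        (∀ P Q : W, Q ≠ P → aeval Q.1 (c P) = 0) ∧ ∑ P, c P = 1 := by
  classical
  let ev : restrictMultidegree K d →ₗ[K] (σ → K) → K :=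
    (LinearMap.pi fun P ↦ (aeval P).toLinearMap) ∘ₗ (restrictMultidegree K d).subtype
  obtain ⟨W, hWZ, hinj, hsurj⟩ := exists_finset_bijective_restrict ev (Z := Z) fun f hf ↦
    Subtype.ext (Submodule.disjoint_def.1 hZ f f.2 hf)
  let evW : restrictMultidegree K d ≃ₗ[K] W → K :=
    .ofBijective (LinearMap.funLeft K K Subtype.val ∘ₗ ev) ⟨hinj, hsurj⟩
  have hevW (f : restrictMultidegree K d) (Q : W) : evW f Q = aeval Q.1 f.1 := rfl
  have hcard : W.card = ∏ i, (d i + 1) := by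
    rw [← finrank_restrictMultidegree (R := K), evW.finrank_eq, Module.finrank_fintype_fun_eq_card,
      Fintype.card_coe]
  refine ⟨W, hWZ, hcard, fun P ↦ evW.symm (Pi.single P 1), fun P ↦ Subtype.prop _,
    fun P Q hQP ↦ ?_, ?_⟩
  · rw [← hevW, evW.apply_symm_apply, Pi.single_eq_of_ne hQP]
  · have hone : evW ⟨1, one_mem_restrictMultidegree d⟩ = ∑ P, Pi.single P 1 := by
      refine Eq.trans ?_ (Finset.univ_sum_single (1 : W → K)).symm
      ext Q
      rw [hevW, map_one, Pi.one_apply]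
    rw [← Submodule.coe_sum, ← map_sum, ← hone, evW.symm_apply_apply]

lemma isUnit_of_forall_dvd_of_sum_eq_one [Nontrivial σ] {d : σ → ℕ} {W : Finset (σ → K)}
    {c : W → MvPolynomial σ K} (hcd : ∀ P, c P ∈ restrictMultidegree K d)
    (hcW : ∀ P Q : W, Q ≠ P → aeval Q.1 (c P) = 0) (hc : ∑ P, c P = 1) {H : MvPolynomial σ K}
    (hH : ∀ f ∈ restrictMultidegree K (d + 1) ⊓
      (vanishingIdeal K (W : Set (σ → K))).restrictScalars K, H ∣ f) : IsUnit H := by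
  have hmul (P : W) (i : σ) : H ∣ (X i - C (P.1 i)) * c P := by
    classical
    refine hH _ ⟨?_, fun Q hQ ↦ ?_⟩
    · rw [add_comm d]
      refine mul_mem_restrictMultidegree (mem_restrictMultidegree.2 fun j ↦ ?_) (hcd P)
      exact (degreeOf_sub_le j _ _).trans (by rw [degreeOf_X, degreeOf_C]; split_ifs <;> simp)
    · rcases eq_or_ne Q P with rfl | hQP
      · simp
      · rw [map_mul, hcW P ⟨Q, hQ⟩ (Subtype.coe_ne_coe.1 hQP), mul_zero]
  obtain ⟨i, j, hij⟩ := exists_pair_ne σ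
  exact isUnit_of_dvd_one <| hc ▸ Finset.dvd_sum fun P _ ↦
    dvd_of_isRelPrime_of_dvd_mul (isRelPrime_X_sub_C hij (P.1 i) (P.1 j)) (hmul P i) (hmul P j)

theorem mul_prod_le_of_mem_vanishingIdeal_pow [Infinite K] {d : Fin 2 → ℕ} {Z : Set (Fin 2 → K)}
    (hZ : Disjoint (restrictMultidegree K d) ((vanishingIdeal K Z).restrictScalars K))
    {F : MvPolynomial (Fin 2) K} (hF : F ≠ 0) {m : ℕ}
    (hFZ : ∀ P ∈ Z, F ∈ vanishingIdeal K {P} ^ m) :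
    m * ((d 0 + 1) * (d 1 + 1)) ≤ degreeOf 0 F * (d 1 + 1) + (d 0 + 1) * degreeOf 1 F := by
  obtain ⟨W, hWZ, hcard, c, hcd, hcW, hc⟩ := exists_separating_finset hZ
  obtain ⟨G, ⟨hGd, hGW⟩, hG, hFG⟩ := exists_mem_isRelPrime
    (fun _ ↦ isUnit_of_forall_dvd_of_sum_eq_one hcd hcW hc) hF
  calc m * ((d 0 + 1) * (d 1 + 1))
      = W.card * m := by rw [hcard, Fin.prod_univ_two, mul_comm]
    _ ≤ degreeOf 0 F * degreeOf 1 G + degreeOf 0 G * degreeOf 1 F :=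
        card_mul_le_degreeOf_mul_add hF hG hFG (fun P hP ↦ hFZ P (hWZ hP)) hGW
    _ ≤ degreeOf 0 F * (d 1 + 1) + (d 0 + 1) * degreeOf 1 F := by
        gcongr
        exacts [mem_restrictMultidegree.1 hGd 1, mem_restrictMultidegree.1 hGd 0]

end AffineBound

section LineChart

variable {R A : Type*} [CommRing R] [CommRing A] [Algebra R A]

/-- The standard representative of the point with coordinate `t` in the affine chart
`x₁ - c x₀ ≠ 0` of the projective line. -/
def lineChart (c : R) (t : A) : Fin 2 → A := ![t, 1 + c • t]

/-- The linear form `x₁ - c x₀`, whose nonvanishing defines an affine chart of the projective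
line. -/
def chartForm (c : R) (x : Fin 2 → A) : A := x 1 - c • x 0

lemma map_chartForm {B : Type*} [CommRing B] [Algebra R B] (φ : A →ₐ[R] B) (c : R)
    (x : Fin 2 → A) : φ (chartForm c x) = chartForm c (φ ∘ x) := by
  simp only [chartForm, map_sub, map_smul, Function.comp_apply]

lemma chartForm_X_ne_zero {σ : Type*} [Nontrivial R] (c : R) {x : Fin 2 → σ}
    (hx : x.Injective) : chartForm c (X ∘ x : Fin 2 → MvPolynomial σ R) ≠ 0 := fun h ↦ by
  classical
  have := congrArg (eval (Pi.single (x 1) 1)) h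
  simp [chartForm, hx.eq_iff] at this

lemma eq_chartForm_smul_lineChart {c : R} {x : Fin 2 → A} {t : A}
    (h : x 0 = t * chartForm c x) : x = chartForm c x • lineChart c t := by
  have h1 : x 1 = chartForm c x * (1 + c • t) := by
    rw [mul_add, mul_smul_comm, mul_comm _ t, ← h, chartForm]
    ring
  funext i
  fin_cases i
  · exact h.trans (mul_comm _ _)
  · exact h1

lemma lineChart_X_mem_restrictMultidegree {σ : Type*} [DecidableEq σ] [Nontrivial R] (c : R)
    (i : σ) (k : Fin 2) :
    lineChart c (X i : MvPolynomial σ R) k ∈ restrictMultidegree R (Pi.single i 1) := by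
  have hX : X i ∈ restrictMultidegree R (Pi.single i 1) := mem_restrictMultidegree.2 fun j ↦ by
    rw [degreeOf_X, Pi.single_apply]
  fin_cases k
  · exact hX
  · exact add_mem (one_mem_restrictMultidegree _) (Submodule.smul_mem _ c hX)

lemma eq_div_of_chartForm_eq_zero {K : Type*} [Field K] {c : K} {v : Fin 2 → K} (hv : v ≠ 0)
    (h : chartForm c v = 0) : c = v 1 / v 0 := by
  have h1 : v 1 = c * v 0 := sub_eq_zero.1 h
  refine (eq_div_iff fun h0 ↦ hv ?_).2 h1.symm
  ext i
  fin_cases i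
  · exact h0
  · exact h1.trans (by rw [h0, mul_zero]; rfl)

end LineChart

section Dehomogenization

variable {A : Type*} [CommRing A] [Algebra ℂ A]

/-- Dehomogenization of bihomogeneous forms with respect to `x₁ - c x₀` and `y₁ - c y₀`. -/
def dehom (c : ℂ) : R4 →ₐ[ℂ] MvPolynomial (Fin 2) ℂ :=
  aeval (Sum.elim (lineChart c (X 0)) (lineChart c (X 1)))

lemma aeval_dehom (c : ℂ) (a : Fin 2 → A) (F : R4) :
    aeval a (dehom c F) = aeval (Sum.elim (lineChart c (a 0)) (lineChart c (a 1))) F := by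
  have h : (aeval a).comp (dehom c) =
      aeval (Sum.elim (lineChart c (a 0)) (lineChart c (a 1))) := by
    ext i
    rcases i with i | i <;> fin_cases i <;> simp [dehom, lineChart]
  exact AlgHom.congr_fun h F

lemma weight_biWeight (v : Fin 2 ⊕ Fin 2 →₀ ℕ) :
    Finsupp.weight biWeight v =
      (v (Sum.inl 0) + v (Sum.inl 1), v (Sum.inr 0) + v (Sum.inr 1)) := by
  rw [Finsupp.weight_apply, Finsupp.sum_fintype _ _ (by simp)]
  simp only [Fintype.sum_sum_type, Fin.sum_univ_two, biWeight, Sum.elim_inl, Sum.elim_inr,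
    Prod.smul_mk, Prod.mk_add_mk, smul_eq_mul, mul_one, mul_zero, add_zero, zero_add]

namespace IsBiForm

variable {F : R4} {p q : ℕ}

lemma eq_of_mem_support (hF : IsBiForm F p q) {v : Fin 2 ⊕ Fin 2 →₀ ℕ} (hv : v ∈ F.support) :
    v (Sum.inl 0) + v (Sum.inl 1) = p ∧ v (Sum.inr 0) + v (Sum.inr 1) = q :=
  Prod.ext_iff.1 ((weight_biWeight v).symm.trans (hF (mem_support_iff.1 hv)))

lemma aeval_smul (hF : IsBiForm F p q) (s t : A) (x y : Fin 2 → A) :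
    aeval (Sum.elim (s • x) (t • y)) F = s ^ p * t ^ q * aeval (Sum.elim x y) F := by
  simp only [aeval_def, eval₂_eq', Finset.mul_sum]
  refine Finset.sum_congr rfl fun v hv ↦ ?_
  obtain ⟨rfl, rfl⟩ := hF.eq_of_mem_support hv
  simp only [Fintype.prod_sum_type, Fin.prod_univ_two, Sum.elim_inl, Sum.elim_inr, Pi.smul_apply,
    smul_eq_mul]
  ring

lemma aeval_eq_mul_aeval_dehom (hF : IsBiForm F p q) {c : ℂ} {x y a : Fin 2 → A}
    (hx : x 0 = a 0 * chartForm c x) (hy : y 0 = a 1 * chartForm c y) :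
    aeval (Sum.elim x y) F =
      chartForm c x ^ p * chartForm c y ^ q * aeval a (dehom c F) := by
  conv_lhs => rw [eq_chartForm_smul_lineChart hx, eq_chartForm_smul_lineChart hy]
  rw [hF.aeval_smul, aeval_dehom]

lemma dehom_mem_restrictMultidegree (hF : IsBiForm F p q) (c : ℂ) :
    dehom c F ∈ restrictMultidegree ℂ ![p, q] := by
  refine aeval_mem_restrictMultidegree
    (w := Sum.elim (fun _ ↦ Pi.single 0 1) fun _ ↦ Pi.single 1 1) (fun j ↦ ?_) fun v hv ↦ ?_
  · cases j <;> exact lineChart_X_mem_restrictMultidegree c _ _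
  · obtain ⟨rfl, rfl⟩ := hF.eq_of_mem_support hv
    rw [Finsupp.weight_apply, Finsupp.sum_fintype _ _ (by simp)]
    intro i
    fin_cases i <;> simp [Fin.sum_univ_two]

lemma dehom_ne_zero (hF : IsBiForm F p q) (c : ℂ) (h : F ≠ 0) : dehom c F ≠ 0 := by
  intro hzero
  let ξ (j : Fin 2 ⊕ Fin 2) : FractionRing R4 := algebraMap R4 _ (X j)
  have hξ : aeval ξ F = algebraMap R4 _ F :=
    (aeval_algebraMap_apply _ X F).trans (by rw [aeval_X_left_apply])
  have hform (x : Fin 2 → Fin 2 ⊕ Fin 2) (hx : x.Injective) : chartForm c (ξ ∘ x) ≠ 0 := by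
    have := map_chartForm (IsScalarTower.toAlgHom ℂ R4 (FractionRing R4)) c (X ∘ x)
    exact fun h0 ↦ chartForm_X_ne_zero c hx <|
      (IsFractionRing.to_map_eq_zero_iff (K := FractionRing R4)).1 (this.trans h0)
  have := hF.aeval_eq_mul_aeval_dehom (c := c) (x := ξ ∘ Sum.inl) (y := ξ ∘ Sum.inr)
    (a := ![_, _]) (div_mul_cancel₀ _ (hform _ Sum.inl_injective)).symm
    (div_mul_cancel₀ _ (hform _ Sum.inr_injective)).symm
  rw [hzero, map_zero, mul_zero, Sum.elim_comp_inl_inr, hξ] at this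
  exact h ((IsFractionRing.to_map_eq_zero_iff).1 this)

end IsBiForm

lemma isBiForm_X_inl (i : Fin 2) : IsBiForm (X (Sum.inl i)) 1 0 :=
  isWeightedHomogeneous_X ℂ biWeight (Sum.inl i)

lemma isBiForm_X_inr (i : Fin 2) : IsBiForm (X (Sum.inr i)) 0 1 :=
  isWeightedHomogeneous_X ℂ biWeight (Sum.inr i)

lemma isBiForm_chartForm_inl (c : ℂ) : IsBiForm (chartForm c (X ∘ Sum.inl)) 1 0 := by
  rw [chartForm, smul_eq_C_mul]
  exact (isBiForm_X_inl 1).sub ((isBiForm_X_inl 0).C_mul c)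

lemma isBiForm_chartForm_inr (c : ℂ) : IsBiForm (chartForm c (X ∘ Sum.inr)) 0 1 := by
  rw [chartForm, smul_eq_C_mul]
  exact (isBiForm_X_inr 1).sub ((isBiForm_X_inr 0).C_mul c)

lemma exists_isBiForm_dehom_eq (c : ℂ) {p q : ℕ} {f : MvPolynomial (Fin 2) ℂ}
    (hf : f ∈ restrictMultidegree ℂ ![p, q]) : ∃ F, IsBiForm F p q ∧ dehom c F = f := by
  suffices h : restrictMultidegree ℂ ![p, q] ≤
      (weightedHomogeneousSubmodule ℂ biWeight (p, q)).map (dehom c).toLinearMap from h hf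
  rw [restrictMultidegree, restrictSupport_eq_span, Submodule.span_le]
  rintro _ ⟨v, hv, rfl⟩
  have hv0 : v 0 ≤ p := hv 0
  have hv1 : v 1 ≤ q := hv 1
  refine ⟨X (Sum.inl 0) ^ v 0 * chartForm c (X ∘ Sum.inl) ^ (p - v 0) *
    (X (Sum.inr 0) ^ v 1 * chartForm c (X ∘ Sum.inr) ^ (q - v 1)), ?_, ?_⟩
  · convert (((isBiForm_X_inl 0).pow (v 0)).mul ((isBiForm_chartForm_inl c).pow (p - v 0))).mul
      (((isBiForm_X_inr 0).pow (v 1)).mul ((isBiForm_chartForm_inr c).pow (q - v 1))) using 1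
    simp [hv0, hv1]
  · beta_reduce
    rw [monomial_eq, Finsupp.prod_fintype _ _ (by simp), Fin.prod_univ_two]
    simp [dehom, chartForm, lineChart]

end Dehomogenization

section Points

/-- The coordinate of a point of the projective line in the chart `x₁ - c x₀ ≠ 0` (with junk
value `0` at the point outside the chart). -/
def affineCoord (c : ℂ) (v : ProjLine) : ℂ := v.rep 0 / chartForm c v.rep

/-- The coordinates of a point of `ℙ¹ × ℙ¹` in the affine chart given by `c` on both factors. -/
def affinePoint (c : ℂ) (P : ProjLine × ProjLine) : Fin 2 → ℂ :=
  ![affineCoord c P.1, affineCoord c P.2]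

lemma exists_forall_chartForm_ne_zero (Z : Finset (ProjLine × ProjLine)) :
    ∃ c : ℂ, ∀ P ∈ Z, chartForm c P.1.rep ≠ 0 ∧ chartForm c P.2.rep ≠ 0 := by
  classical
  obtain ⟨c, hc⟩ := Infinite.exists_notMem_finset
    ((Z.image Prod.fst ∪ Z.image Prod.snd).image fun v ↦ v.rep 1 / v.rep 0)
  have hne {v : ProjLine} (hv : v ∈ Z.image Prod.fst ∪ Z.image Prod.snd) :
      chartForm c v.rep ≠ 0 := fun h ↦ hc <|
    eq_div_of_chartForm_eq_zero v.rep_nonzero h ▸ Finset.mem_image_of_mem _ hv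
  exact ⟨c, fun P hP ↦ ⟨hne (Finset.mem_union_left _ (Finset.mem_image_of_mem _ hP)),
    hne (Finset.mem_union_right _ (Finset.mem_image_of_mem _ hP))⟩⟩

lemma rep_mul_lineChart_sub {c : ℂ} {v : ProjLine} (hv : chartForm c v.rep ≠ 0) :
    v.rep 1 * lineChart c (affineCoord c v) 0 - v.rep 0 * lineChart c (affineCoord c v) 1 = 0 := by
  have h := eq_chartForm_smul_lineChart (div_mul_cancel₀ (v.rep 0) hv).symm
  have h0 := congrFun h 0
  have h1 := congrFun h 1
  simp only [Pi.smul_apply, smul_eq_mul] at h0 h1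
  rw [affineCoord]
  linear_combination lineChart c (v.rep 0 / chartForm c v.rep) 0 * h1 -
    lineChart c (v.rep 0 / chartForm c v.rep) 1 * h0

lemma eq_algebraMap_mul_chartForm {A : Type*} [CommRing A] [Algebra ℂ A] {c : ℂ} {v : ProjLine}
    (hv : chartForm c v.rep ≠ 0) {x : Fin 2 → A}
    (hx : algebraMap ℂ A (v.rep 1) * x 0 - algebraMap ℂ A (v.rep 0) * x 1 = 0) :
    x 0 = algebraMap ℂ A (affineCoord c v) * chartForm c x := by
  have hunit : IsUnit (algebraMap ℂ A (chartForm c v.rep)) := hv.isUnit.map (algebraMap ℂ A)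
  have hdiv := congrArg (algebraMap ℂ A) (div_mul_cancel₀ (v.rep 0) hv)
  have hform : algebraMap ℂ A (chartForm c v.rep) =
      algebraMap ℂ A (v.rep 1) - algebraMap ℂ A c * algebraMap ℂ A (v.rep 0) := by
    rw [chartForm, smul_eq_mul, map_sub, map_mul]
  rw [map_mul] at hdiv
  refine hunit.mul_left_cancel ?_
  rw [affineCoord, chartForm.eq_def c x, Algebra.smul_def]
  linear_combination hx + x 0 * hform + (algebraMap ℂ A c * x 0 - x 1) * hdiv

variable {c : ℂ} {P : ProjLine × ProjLine}

lemma map_pointIdeal_le (h₁ : chartForm c P.1.rep ≠ 0) (h₂ : chartForm c P.2.rep ≠ 0) :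
    (pointIdeal P).map (dehom c) ≤ vanishingIdeal ℂ {affinePoint c P} := by
  rw [pointIdeal, Ideal.map_span, Ideal.span_le]
  rintro _ ⟨g, rfl | rfl, rfl⟩ <;>
  rw [SetLike.mem_coe, mem_vanishingIdeal_singleton_iff, aeval_dehom]
  · simpa [affinePoint] using rep_mul_lineChart_sub h₁
  · simpa [affinePoint] using rep_mul_lineChart_sub h₂

lemma IsBiForm.mem_pointIdeal {F : R4} {p q : ℕ} (hF : IsBiForm F p q)
    (h₁ : chartForm c P.1.rep ≠ 0) (h₂ : chartForm c P.2.rep ≠ 0)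
    (h : aeval (affinePoint c P) (dehom c F) = 0) : F ∈ pointIdeal P := by
  let x : Fin 2 → R4 ⧸ pointIdeal P := fun i ↦ Ideal.Quotient.mk _ (X (Sum.inl i))
  let y : Fin 2 → R4 ⧸ pointIdeal P := fun i ↦ Ideal.Quotient.mk _ (X (Sum.inr i))
  have hx := eq_algebraMap_mul_chartForm h₁ (x := x) <|
    Ideal.Quotient.eq_zero_iff_mem.2 (Ideal.subset_span (Set.mem_insert _ _))
  have hy := eq_algebraMap_mul_chartForm h₂ (x := y) <|
    Ideal.Quotient.eq_zero_iff_mem.2 (Ideal.subset_span (Set.mem_insert_of_mem _ rfl))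
  have hmk : aeval (Sum.elim x y) F = Ideal.Quotient.mk (pointIdeal P) F := by
    have hX : Sum.elim x y = Ideal.Quotient.mkₐ ℂ (pointIdeal P) ∘ X := by
      ext i; cases i <;> rfl
    rw [hX, ← aeval_unique]
    rfl
  rw [← Ideal.Quotient.eq_zero_iff_mem, ← hmk,
    hF.aeval_eq_mul_aeval_dehom (a := algebraMap ℂ _ ∘ affinePoint c P) hx hy]
  rw [aeval_algebraMap_apply, h, map_zero, mul_zero]

end Points

section SymbolicPowers

variable {Z : Finset (ProjLine × ProjLine)} {m : ℕ}

lemma mem_symbPow {F : R4} : F ∈ symbPow Z m ↔ ∀ P ∈ Z, F ∈ pointIdeal P ^ m := by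
  simp only [symbPow, Submodule.mem_iInf]

theorem mul_le_of_isBiForm_of_mem_symbPow {a b p q : ℕ}
    (hI : ∀ G ∈ symbPow Z 1, IsBiForm G a b → G = 0) {F : R4} (hF : F ≠ 0)
    (hpq : IsBiForm F p q) (hFm : F ∈ symbPow Z m) :
    m * ((a + 1) * (b + 1)) ≤ p * (b + 1) + (a + 1) * q := by
  obtain ⟨c, hc⟩ := exists_forall_chartForm_ne_zero Z
  have hdisj : Disjoint (restrictMultidegree ℂ ![a, b])
      ((vanishingIdeal ℂ (affinePoint c '' Z)).restrictScalars ℂ) := by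
    refine Submodule.disjoint_def.2 fun f hf hfZ ↦ ?_
    obtain ⟨G, hG, rfl⟩ := exists_isBiForm_dehom_eq c hf
    have hGI : G ∈ symbPow Z 1 := mem_symbPow.2 fun P hP ↦ by
      rw [pow_one]
      exact hG.mem_pointIdeal (hc P hP).1 (hc P hP).2 (hfZ _ (Set.mem_image_of_mem _ hP))
    rw [hI G hGI hG, map_zero]
  have hvanish : ∀ Q ∈ affinePoint c '' Z, dehom c F ∈ vanishingIdeal ℂ {Q} ^ m := by
    rintro _ ⟨P, hP, rfl⟩
    refine Ideal.pow_right_mono (map_pointIdeal_le (hc P hP).1 (hc P hP).2) m ?_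
    rw [← Ideal.map_pow]
    exact Ideal.mem_map_of_mem _ (mem_symbPow.1 hFm P hP)
  have hdeg := mem_restrictMultidegree.1 (hpq.dehom_mem_restrictMultidegree c)
  calc m * ((a + 1) * (b + 1))
      ≤ degreeOf 0 (dehom c F) * (b + 1) + (a + 1) * degreeOf 1 (dehom c F) :=
        mul_prod_le_of_mem_vanishingIdeal_pow hdisj (hpq.dehom_ne_zero c hF) hvanish
    _ ≤ p * (b + 1) + (a + 1) * q := by
        gcongr
        exacts [hdeg 0, hdeg 1]

lemma C_mul_X_sub_C_mul_X_ne_zero {σ R : Type*} [CommRing R] {i j : σ} (hij : i ≠ j)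
    {v : Fin 2 → R} (hv : v ≠ 0) : (C (v 1) * X i - C (v 0) * X j : MvPolynomial σ R) ≠ 0 := by
  classical
  refine fun h ↦ hv ?_
  have h0 := congrArg (eval (Pi.single j 1)) h
  have h1 := congrArg (eval (Pi.single i 1)) h
  ext k
  fin_cases k
  · simpa [hij] using h0
  · simpa [hij.symm] using h1

lemma exists_isBiForm_mem_pointIdeal (P : ProjLine × ProjLine) :
    ∃ G ∈ pointIdeal P, G ≠ 0 ∧ IsBiForm G 1 1 := by
  refine ⟨(C (P.1.rep 1) * X (Sum.inl 0) - C (P.1.rep 0) * X (Sum.inl 1)) *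
    (C (P.2.rep 1) * X (Sum.inr 0) - C (P.2.rep 0) * X (Sum.inr 1)),
    Ideal.mul_mem_right _ _ (Ideal.subset_span (Set.mem_insert _ _)),
    mul_ne_zero (C_mul_X_sub_C_mul_X_ne_zero (by simp) P.1.rep_nonzero)
      (C_mul_X_sub_C_mul_X_ne_zero (by simp) P.2.rep_nonzero), ?_⟩
  exact (((isBiForm_X_inl 0).C_mul _).sub ((isBiForm_X_inl 1).C_mul _)).mul
    (((isBiForm_X_inr 0).C_mul _).sub ((isBiForm_X_inr 1).C_mul _))

lemma exists_isBiForm_mem_symbPow (Z : Finset (ProjLine × ProjLine)) (m : ℕ) :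
    ∃ t, ∃ F ∈ symbPow Z m, F ≠ 0 ∧ IsBiForm F t t := by
  choose G hGP hG hG1 using exists_isBiForm_mem_pointIdeal
  refine ⟨m * Z.card, (∏ P ∈ Z, G P) ^ m, mem_symbPow.2 fun P hP ↦ Ideal.pow_mem_pow
    (Ideal.mem_of_dvd _ (Finset.dvd_prod_of_mem G hP) (hGP P)) m,
    pow_ne_zero _ (Finset.prod_ne_zero_iff.2 fun P _ ↦ hG P), ?_⟩
  convert (IsWeightedHomogeneous.prod Z G (fun _ ↦ (1, 1)) fun P _ ↦ hG1 P).pow m using 1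
  simp [IsBiForm]

theorem alphaPlus_le_two_mul_alphaStar (Z : Finset (ProjLine × ProjLine)) (m : ℕ) :
    alphaPlus (symbPow Z m) ≤ 2 * alphaStar (symbPow Z m) := by
  have hmem := Nat.sInf_mem (exists_isBiForm_mem_symbPow Z m)
  exact Nat.sInf_le ⟨_, _, (two_mul _).symm, hmem⟩

end SymbolicPowers

theorem chudnovsky_P1xP1_general (Z : Finset (ProjLine × ProjLine)) (m : ℕ) :
    m * alphaStar (symbPow Z 1) ≤ alphaPlus (symbPow Z m) := by
  rcases hα : alphaStar (symbPow Z 1) with _ | b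
  · exact Nat.zero_le _
  obtain ⟨t, F₀, hF₀m, hF₀, hF₀t⟩ := exists_isBiForm_mem_symbPow Z m
  obtain ⟨p, q, hpq, F, hFm, hF, hFpq⟩ : alphaPlus (symbPow Z m) ∈ _ :=
    Nat.sInf_mem ⟨t + t, t, t, rfl, F₀, hF₀m, hF₀, hF₀t⟩
  have hI : ∀ G ∈ symbPow Z 1, IsBiForm G b b → G = 0 := fun G hG hGb ↦ by_contra fun hG0 ↦
    b.not_succ_le_self (hα.symm.trans_le (Nat.sInf_le ⟨G, hG, hG0, hGb⟩))
  have h := mul_le_of_isBiForm_of_mem_symbPow hI hF hFpq hFm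
  refine Nat.le_of_mul_le_mul_right ?_ b.succ_pos
  calc m * (b + 1) * (b + 1) = m * ((b + 1) * (b + 1)) := mul_assoc ..
    _ ≤ p * (b + 1) + (b + 1) * q := h
    _ = alphaPlus (symbPow Z m) * (b + 1) := by rw [← hpq]; ring

/-- Chudnovsky-type theorem for `ℙ¹ × ℙ¹`: for the radical ideal `I` of a finite set of
mutually distinct points of `ℙ¹ × ℙ¹` and every `m ≥ 1`, `α*(I^{(m)})/m ≥ α*(I)/2`;
equivalently `2·α*(I^{(m)}) ≥ m·α*(I)`. -/
theorem chudnovsky_P1xP1 (Z : Finset (ProjLine × ProjLine)) (m : ℕ) (hm : 1 ≤ m) :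
    m * alphaStar (symbPow Z 1) ≤ 2 * alphaStar (symbPow Z m) :=
  (chudnovsky_P1xP1_general Z m).trans (alphaPlus_le_two_mul_alphaStar Z m)
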